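/- arXiv:1808.02706 — 5 statements merged into one kernel-verified Lean document; each statement's English description precedes it below -/
import Mathlib

section
/- Let n ≥ 1, σ ≥ 1 and δ ∈ (0, σ/2). Then there exist constants ε ∈ (0,1), c > 0 and C > 0 such that for all ξ ∈ ℝⁿ with 0 < |ξ| ≤ ε and all t > 0: |K̂₁(t,ξ)| ≤ C t e^{−c|ξ|^{2(σ−δ)}t} and |K̂₀(t,ξ)| ≤ C e^{−c|ξ|^{2(σ−δ)}t}. -/
open MeasureTheory Real Complex
open scoped ENNReal NNReal

noncomputable section

variable {n : ℕ}

/-- First characteristic root `λ₁(ξ) = (−|ξ|^{2δ} + √(|ξ|^{4δ} − 4|ξ|^{2σ}))/2`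
(principal complex square root). -/
def lam1 (σ δ : ℝ) (ξ : EuclideanSpace ℝ (Fin n)) : ℂ :=
  (-((‖ξ‖ ^ (2 * δ) : ℝ) : ℂ) +
      (((‖ξ‖ ^ (4 * δ) - 4 * ‖ξ‖ ^ (2 * σ) : ℝ) : ℂ) ^ ((1 : ℂ) / 2))) / 2

/-- Second characteristic root `λ₂(ξ) = (−|ξ|^{2δ} − √(|ξ|^{4δ} − 4|ξ|^{2σ}))/2`. -/
def lam2 (σ δ : ℝ) (ξ : EuclideanSpace ℝ (Fin n)) : ℂ :=
  (-((‖ξ‖ ^ (2 * δ) : ℝ) : ℂ) -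
      (((‖ξ‖ ^ (4 * δ) - 4 * ‖ξ‖ ^ (2 * σ) : ℝ) : ℂ) ^ ((1 : ℂ) / 2))) / 2

/-- Fourier multiplier `K̂₀(t,ξ) = (λ₁ e^{λ₂ t} − λ₂ e^{λ₁ t})/(λ₁ − λ₂)`. -/
def K0hat (σ δ : ℝ) (t : ℝ) (ξ : EuclideanSpace ℝ (Fin n)) : ℂ :=
  (lam1 σ δ ξ * Complex.exp (lam2 σ δ ξ * (t : ℂ)) -
      lam2 σ δ ξ * Complex.exp (lam1 σ δ ξ * (t : ℂ))) / (lam1 σ δ ξ - lam2 σ δ ξ)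

/-- Fourier multiplier `K̂₁(t,ξ) = (e^{λ₁ t} − e^{λ₂ t})/(λ₁ − λ₂)`. -/
def K1hat (σ δ : ℝ) (t : ℝ) (ξ : EuclideanSpace ℝ (Fin n)) : ℂ :=
  (Complex.exp (lam1 σ δ ξ * (t : ℂ)) - Complex.exp (lam2 σ δ ξ * (t : ℂ))) /
    (lam1 σ δ ξ - lam2 σ δ ξ)

/-- A cut-off: a smooth, compactly supported, radial function with `0 ≤ χ ≤ 1`
and `χ(ξ) = 1` for `|ξ| ≤ 1`. -/
def IsCutoff (χ : EuclideanSpace ℝ (Fin n) → ℝ) : Prop :=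
  ContDiff ℝ (⊤ : ℕ∞) χ ∧ HasCompactSupport χ ∧ (∀ ξ, χ ξ ∈ Set.Icc (0 : ℝ) 1) ∧
    (∀ ξ, ‖ξ‖ ≤ 1 → χ ξ = 1) ∧ ∀ ξ η, ‖ξ‖ = ‖η‖ → χ ξ = χ η

/-!
For `|ξ|` small the characteristic polynomial `x² + |ξ|^{2δ} x + |ξ|^{2σ}` has two negative real
roots `λ₂ < λ₁`. Since `λ₁ λ₂ = |ξ|^{2σ}` and `|λ₂| ≤ |ξ|^{2δ}`, the slow root satisfies
`λ₁ ≤ -|ξ|^{2(σ-δ)}`, which gives the decay rate. The kernel `K̂₁` is a divided difference of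
`x ↦ e^{xt}`, hence at most `t e^{λ₁t}` by convexity, and `K̂₀` is at most `λ₂/(λ₂-λ₁) e^{λ₁t}`, a
factor that is bounded because `|ξ|^{2σ}` is small compared with `|ξ|^{4δ}`.
-/

section ExponentialKernels

variable {x y t : ℝ}

lemma abs_exp_sub_exp_div_sub_le (hyx : y < x) (ht : 0 ≤ t) :
    |(Real.exp (x * t) - Real.exp (y * t)) / (x - y)| ≤ t * Real.exp (x * t) := by
  have hxy : 0 < x - y := sub_pos.2 hyx
  have exp_mono : Real.exp (y * t) ≤ Real.exp (x * t) := by gcongr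
  have tangent : Real.exp (x * t) * (1 - (x - y) * t) ≤ Real.exp (y * t) := by
    calc Real.exp (x * t) * (1 - (x - y) * t)
        ≤ Real.exp (x * t) * Real.exp (-((x - y) * t)) := by
          gcongr
          exact Real.one_sub_le_exp_neg _
      _ = Real.exp (y * t) := by rw [← Real.exp_add]; ring_nf
  rw [abs_of_nonneg (div_nonneg (sub_nonneg.2 exp_mono) hxy.le), div_le_iff₀ hxy]
  linarith

lemma abs_mul_exp_sub_mul_exp_div_sub_le (hyx : y < x) (hx : x ≤ 0) (ht : 0 ≤ t) :
    |(x * Real.exp (y * t) - y * Real.exp (x * t)) / (x - y)| ≤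
      y / (y - x) * Real.exp (x * t) := by
  have hxy : 0 < x - y := sub_pos.2 hyx
  have exp_mono : Real.exp (y * t) ≤ Real.exp (x * t) := by gcongr
  have numerator_nonneg : 0 ≤ x * Real.exp (y * t) - y * Real.exp (x * t) := by
    rw [sub_nonneg]
    calc y * Real.exp (x * t) ≤ x * Real.exp (x * t) := by gcongr
      _ ≤ x * Real.exp (y * t) := mul_le_mul_of_nonpos_left exp_mono hx
  rw [abs_of_nonneg (div_nonneg numerator_nonneg hxy.le)]
  calc (x * Real.exp (y * t) - y * Real.exp (x * t)) / (x - y)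
      ≤ -y * Real.exp (x * t) / (x - y) := by
        gcongr
        linarith [mul_nonpos_of_nonpos_of_nonneg hx (Real.exp_pos (y * t)).le]
    _ = y / (y - x) * Real.exp (x * t) := by
        rw [← neg_sub x y, div_neg]
        ring

end ExponentialKernels

section QuadraticRoots

/-- The larger root of `x² + a x + b`, governing the slow mode of `u'' + a u' + b u = 0`. It is
meaningful for `4 b ≤ a²`; otherwise the real square root is `0`. -/
def slowRoot (a b : ℝ) : ℝ := (-a + √(a ^ 2 - 4 * b)) / 2

/-- The smaller root of `x² + a x + b`, governing the fast mode of `u'' + a u' + b u = 0`. It is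
meaningful for `4 b ≤ a²`; otherwise the real square root is `0`. -/
def fastRoot (a b : ℝ) : ℝ := (-a - √(a ^ 2 - 4 * b)) / 2

variable {a b : ℝ}

lemma fastRoot_lt_slowRoot (h : 4 * b < a ^ 2) : fastRoot a b < slowRoot a b := by
  have : 0 < √(a ^ 2 - 4 * b) := Real.sqrt_pos.2 (sub_pos.2 h)
  unfold fastRoot slowRoot
  linarith

lemma slowRoot_le_neg_div (ha : 0 < a) (h : 4 * b ≤ a ^ 2) : slowRoot a b ≤ -(b / a) := by
  have hba : b / a * a = b := div_mul_cancel₀ b ha.ne'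
  have sqrt_le : √(a ^ 2 - 4 * b) ≤ a - 2 * (b / a) := by
    refine Real.sqrt_le_iff.2 ⟨?_, ?_⟩
    · have : b / a ≤ a / 4 := by
        rw [div_le_iff₀ ha]
        linarith
      linarith
    · calc a ^ 2 - 4 * b ≤ a ^ 2 - 4 * (b / a * a) + (2 * (b / a)) ^ 2 := by
            rw [hba]
            exact le_add_of_nonneg_right (sq_nonneg _)
        _ = (a - 2 * (b / a)) ^ 2 := by ring
  unfold slowRoot
  linarith

lemma fastRoot_div_sub_slowRoot_le (ha : 0 < a) (h : 16 * b ≤ 3 * a ^ 2) :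
    fastRoot a b / (fastRoot a b - slowRoot a b) ≤ 3 / 2 := by
  have half_le_sqrt : a / 2 ≤ √(a ^ 2 - 4 * b) := by
    apply Real.le_sqrt_of_sq_le
    linarith
  have gap_neg : fastRoot a b - slowRoot a b < 0 := by
    unfold fastRoot slowRoot
    linarith
  rw [div_le_iff_of_neg gap_neg]
  unfold fastRoot slowRoot
  linarith

end QuadraticRoots

lemma ofReal_cpow_half {d : ℝ} (hd : 0 ≤ d) : (d : ℂ) ^ ((1 : ℂ) / 2) = (√d : ℝ) := by
  rw [Real.sqrt_eq_rpow, Complex.ofReal_cpow hd]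
  norm_num

lemma sq_rpow_two_mul {r : ℝ} (hr : 0 ≤ r) (δ : ℝ) : (r ^ (2 * δ)) ^ 2 = r ^ (4 * δ) := by
  rw [← Real.rpow_mul_natCast hr]
  ring_nf

lemma exists_forall_rpow_le {p η : ℝ} (hp : 0 < p) (hη : 0 < η) :
    ∃ ε ∈ Set.Ioo (0 : ℝ) 1, ∀ r, 0 ≤ r → r ≤ ε → r ^ p ≤ η := by
  refine ⟨min (1 / 2) (η ^ p⁻¹), ⟨by positivity, (min_le_left _ _).trans_lt one_half_lt_one⟩, ?_⟩
  intro r hr hrε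
  exact (Real.le_rpow_inv_iff_of_pos hr hη.le hp).1 (hrε.trans (min_le_right _ _))

section Multipliers

variable {σ δ t : ℝ} {ξ : EuclideanSpace ℝ (Fin n)}

lemma lam1_eq_slowRoot (h : 4 * ‖ξ‖ ^ (2 * σ) ≤ ‖ξ‖ ^ (4 * δ)) :
    lam1 σ δ ξ = slowRoot (‖ξ‖ ^ (2 * δ)) (‖ξ‖ ^ (2 * σ)) := by
  rw [lam1, slowRoot, ofReal_cpow_half (sub_nonneg.2 h), sq_rpow_two_mul (norm_nonneg ξ)]
  push_cast
  rfl

lemma lam2_eq_fastRoot (h : 4 * ‖ξ‖ ^ (2 * σ) ≤ ‖ξ‖ ^ (4 * δ)) :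
    lam2 σ δ ξ = fastRoot (‖ξ‖ ^ (2 * δ)) (‖ξ‖ ^ (2 * σ)) := by
  rw [lam2, fastRoot, ofReal_cpow_half (sub_nonneg.2 h), sq_rpow_two_mul (norm_nonneg ξ)]
  push_cast
  rfl

lemma fastRoot_lt_slowRoot_norm_rpow (h : 4 * ‖ξ‖ ^ (2 * σ) < ‖ξ‖ ^ (4 * δ)) :
    fastRoot (‖ξ‖ ^ (2 * δ)) (‖ξ‖ ^ (2 * σ)) < slowRoot (‖ξ‖ ^ (2 * δ)) (‖ξ‖ ^ (2 * σ)) :=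
  fastRoot_lt_slowRoot (by rwa [sq_rpow_two_mul (norm_nonneg ξ)])

lemma slowRoot_norm_rpow_le (hξ : 0 < ‖ξ‖) (h : 4 * ‖ξ‖ ^ (2 * σ) ≤ ‖ξ‖ ^ (4 * δ)) :
    slowRoot (‖ξ‖ ^ (2 * δ)) (‖ξ‖ ^ (2 * σ)) ≤ -‖ξ‖ ^ (2 * (σ - δ)) := by
  rw [mul_sub, Real.rpow_sub hξ]
  rw [← sq_rpow_two_mul hξ.le] at h
  exact slowRoot_le_neg_div (Real.rpow_pos_of_pos hξ _) h

theorem norm_K1hat_le (hξ : 0 < ‖ξ‖) (h : 4 * ‖ξ‖ ^ (2 * σ) < ‖ξ‖ ^ (4 * δ)) (ht : 0 ≤ t) :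
    ‖K1hat σ δ t ξ‖ ≤ t * Real.exp (-‖ξ‖ ^ (2 * (σ - δ)) * t) := by
  have roots_lt := fastRoot_lt_slowRoot_norm_rpow h
  have slow_le := slowRoot_norm_rpow_le hξ h.le
  rw [K1hat, lam1_eq_slowRoot h.le, lam2_eq_fastRoot h.le]
  norm_cast
  rw [Real.norm_eq_abs]
  exact (abs_exp_sub_exp_div_sub_le roots_lt ht).trans (by gcongr)

theorem norm_K0hat_le (hξ : 0 < ‖ξ‖) (h : 16 * ‖ξ‖ ^ (2 * σ) ≤ 3 * ‖ξ‖ ^ (4 * δ)) (ht : 0 ≤ t) :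
    ‖K0hat σ δ t ξ‖ ≤ 3 / 2 * Real.exp (-‖ξ‖ ^ (2 * (σ - δ)) * t) := by
  have disc_pos : 4 * ‖ξ‖ ^ (2 * σ) < ‖ξ‖ ^ (4 * δ) := by
    linarith [Real.rpow_pos_of_pos hξ (4 * δ)]
  have roots_lt := fastRoot_lt_slowRoot_norm_rpow disc_pos
  have slow_le := slowRoot_norm_rpow_le hξ disc_pos.le
  have slow_nonpos := slow_le.trans (neg_nonpos.2 (Real.rpow_nonneg hξ.le _))
  have ratio_le := fastRoot_div_sub_slowRoot_le (b := ‖ξ‖ ^ (2 * σ))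
    (Real.rpow_pos_of_pos hξ (2 * δ)) (by rwa [sq_rpow_two_mul hξ.le])
  rw [K0hat, lam1_eq_slowRoot disc_pos.le, lam2_eq_fastRoot disc_pos.le]
  norm_cast
  rw [Real.norm_eq_abs]
  exact (abs_mul_exp_sub_mul_exp_div_sub_le roots_lt slow_nonpos ht).trans (by gcongr)

end Multipliers

theorem stmt_12_general (n : ℕ) {σ δ : ℝ} (hδ : δ < σ / 2) :
    ∃ ε c C : ℝ, ε ∈ Set.Ioo (0 : ℝ) 1 ∧ 0 < c ∧ 0 < C ∧
      ∀ ξ : EuclideanSpace ℝ (Fin n), 0 < ‖ξ‖ → ‖ξ‖ ≤ ε → ∀ t : ℝ, 0 < t →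
        ‖K1hat σ δ t ξ‖ ≤ C * t * Real.exp (-c * ‖ξ‖ ^ (2 * (σ - δ)) * t) ∧
        ‖K0hat σ δ t ξ‖ ≤ C * Real.exp (-c * ‖ξ‖ ^ (2 * (σ - δ)) * t) := by
  obtain ⟨ε, hε, rpow_le⟩ : ∃ ε ∈ Set.Ioo (0 : ℝ) 1, ∀ r, 0 ≤ r → r ≤ ε →
      r ^ (2 * σ - 4 * δ) ≤ 3 / 16 :=
    exists_forall_rpow_le (by linarith) (by norm_num)
  refine ⟨ε, 1, 3 / 2, hε, one_pos, by norm_num, fun ξ hξ hξε t ht ↦ ?_⟩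
  have hpos : 0 < ‖ξ‖ ^ (4 * δ) := Real.rpow_pos_of_pos hξ _
  have small : 16 * ‖ξ‖ ^ (2 * σ) ≤ 3 * ‖ξ‖ ^ (4 * δ) := by
    have := rpow_le ‖ξ‖ hξ.le hξε
    rw [Real.rpow_sub hξ, div_le_iff₀ hpos] at this
    linarith
  rw [neg_one_mul]
  refine ⟨(norm_K1hat_le hξ (by linarith) ht.le).trans ?_, norm_K0hat_le hξ small ht.le⟩
  gcongr
  linarith

/-- Pointwise bounds on `K̂₀`, `K̂₁` for small frequencies. -/
theorem stmt_12 (n : ℕ) (hn : 1 ≤ n) (σ δ : ℝ) (hσ : 1 ≤ σ) (hδ : δ ∈ Set.Ioo 0 (σ / 2)) :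
    ∃ ε c C : ℝ, ε ∈ Set.Ioo (0 : ℝ) 1 ∧ 0 < c ∧ 0 < C ∧
      ∀ ξ : EuclideanSpace ℝ (Fin n), 0 < ‖ξ‖ → ‖ξ‖ ≤ ε → ∀ t : ℝ, 0 < t →
        ‖K1hat σ δ t ξ‖ ≤ C * t * Real.exp (-c * ‖ξ‖ ^ (2 * (σ - δ)) * t) ∧
        ‖K0hat σ δ t ξ‖ ≤ C * Real.exp (-c * ‖ξ‖ ^ (2 * (σ - δ)) * t) :=
  stmt_12_general n hδ.2
end
end

section
/- Let n ≥ 1, σ ≥ 1 and δ ∈ (0, σ/2). Then there exist constants R ≥ 1, c > 0 and C > 0 such that for all ξ ∈ ℝⁿ with |ξ| ≥ R and all t > 0: |K̂₁(t,ξ)| ≤ C t e^{−c|ξ|^{2δ}t} and |K̂₀(t,ξ)| ≤ C e^{−c|ξ|^{2δ}t}. -/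
open MeasureTheory Real Complex
open scoped ENNReal NNReal

noncomputable section

variable {n : ℕ}

/-!
Once the discriminant is nonpositive, the roots are complex conjugate with real part `-|ξ|^{2δ}/2`
and modulus `|ξ|^σ`, so both exponentials have modulus `e^{-|ξ|^{2δ}t/2}`. The mean value inequality
for `exp` on a half-plane bounds `K̂₁` without any lower bound on the gap `λ₁ - λ₂`, while `K̂₀`
needs `(|λ₁| + |λ₂|)/|λ₁ - λ₂|` to stay bounded. As `2δ ≤ σ`, for `|ξ| ≥ 1` the gap
`√(4|ξ|^{2σ} - |ξ|^{4δ})` is at least `|ξ|^σ`, so `R = 1`, `c = 1/2` and `C = 2` work.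
-/

theorem norm_exp_sub_exp_le_of_re_le {z w : ℂ} {b : ℝ} (hz : z.re ≤ b) (hw : w.re ≤ b) :
    ‖Complex.exp z - Complex.exp w‖ ≤ Real.exp b * ‖z - w‖ :=
  (convex_halfSpace_re_le b).norm_image_sub_le_of_norm_hasDerivWithin_le
    (fun x _ ↦ (Complex.hasDerivAt_exp x).hasDerivWithinAt)
    (fun x hx ↦ (Complex.norm_exp x).trans_le (Real.exp_le_exp.mpr hx)) hw hz

theorem norm_exp_mul_sub_exp_mul_div_sub_le {z w s : ℂ} {b : ℝ} (hz : (z * s).re ≤ b)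
    (hw : (w * s).re ≤ b) :
    ‖(Complex.exp (z * s) - Complex.exp (w * s)) / (z - w)‖ ≤ ‖s‖ * Real.exp b := by
  rw [norm_div]
  refine div_le_of_le_mul₀ (norm_nonneg _) (by positivity) ?_
  calc ‖Complex.exp (z * s) - Complex.exp (w * s)‖
      ≤ Real.exp b * ‖z * s - w * s‖ := norm_exp_sub_exp_le_of_re_le hz hw
    _ = ‖s‖ * Real.exp b * ‖z - w‖ := by rw [← sub_mul, norm_mul]; ring

theorem norm_mul_exp_mul_sub_mul_exp_mul_div_sub_le {z w s : ℂ} {b : ℝ}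
    (hz : (z * s).re ≤ b) (hw : (w * s).re ≤ b) :
    ‖(z * Complex.exp (w * s) - w * Complex.exp (z * s)) / (z - w)‖ ≤
      (‖z‖ + ‖w‖) / ‖z - w‖ * Real.exp b := by
  have norm_exp_le {u : ℂ} (hu : u.re ≤ b) : ‖Complex.exp u‖ ≤ Real.exp b :=
    (Complex.norm_exp u).trans_le (Real.exp_le_exp.mpr hu)
  rw [norm_div, div_mul_eq_mul_div]
  gcongr
  calc ‖z * Complex.exp (w * s) - w * Complex.exp (z * s)‖
      ≤ ‖z‖ * ‖Complex.exp (w * s)‖ + ‖w‖ * ‖Complex.exp (z * s)‖ := by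
        simpa only [norm_mul] using
          norm_sub_le (z * Complex.exp (w * s)) (w * Complex.exp (z * s))
    _ ≤ (‖z‖ + ‖w‖) * Real.exp b := by
        rw [add_mul]
        gcongr
        exacts [norm_exp_le hw, norm_exp_le hz]

open scoped ComplexOrder in
theorem ofReal_cpow_one_half_of_nonpos {x : ℝ} (hx : x ≤ 0) :
    (x : ℂ) ^ ((1 : ℂ) / 2) = √(-x) * I := by
  have hneg : (0 : ℂ) ≤ ((-x : ℝ) : ℂ) := by exact_mod_cast neg_nonneg.mpr hx
  have hsqrt := Complex.sqrt_neg_of_nonneg hneg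
  rw [Complex.sqrt_of_nonneg hneg, ← Complex.ofReal_neg, neg_neg, Complex.ofReal_re] at hsqrt
  rw [one_div, mul_comm]
  exact hsqrt

section CharacteristicRoots

variable {σ δ : ℝ} {ξ : EuclideanSpace ℝ (Fin n)}

theorem lam1_eq_of_discrim_nonpos (h : ‖ξ‖ ^ (4 * δ) ≤ 4 * ‖ξ‖ ^ (2 * σ)) :
    lam1 σ δ ξ = ⟨-(‖ξ‖ ^ (2 * δ) / 2), √(4 * ‖ξ‖ ^ (2 * σ) - ‖ξ‖ ^ (4 * δ)) / 2⟩ := by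
  rw [lam1, ofReal_cpow_one_half_of_nonpos (sub_nonpos.mpr h), neg_sub, Complex.mk_eq_add_mul_I]
  push_cast
  ring

theorem lam2_eq_conj_lam1_of_discrim_nonpos (h : ‖ξ‖ ^ (4 * δ) ≤ 4 * ‖ξ‖ ^ (2 * σ)) :
    lam2 σ δ ξ = starRingEnd ℂ (lam1 σ δ ξ) := by
  rw [lam1, lam2, ofReal_cpow_one_half_of_nonpos (sub_nonpos.mpr h)]
  simp only [map_div₀, map_add, map_neg, map_mul, Complex.conj_ofReal, Complex.conj_I,
    Complex.conj_ofNat, mul_neg, sub_eq_add_neg]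

theorem norm_lam1_of_discrim_nonpos (h : ‖ξ‖ ^ (4 * δ) ≤ 4 * ‖ξ‖ ^ (2 * σ)) :
    ‖lam1 σ δ ξ‖ = ‖ξ‖ ^ σ := by
  have sq_rpow_two_mul : (‖ξ‖ ^ (2 * δ)) ^ 2 = ‖ξ‖ ^ (4 * δ) := by
    rw [← Real.rpow_mul_natCast (norm_nonneg ξ)]; congr 1; push_cast; ring
  have sq_rpow : (‖ξ‖ ^ σ) ^ 2 = ‖ξ‖ ^ (2 * σ) := by
    rw [← Real.rpow_mul_natCast (norm_nonneg ξ)]; congr 1; push_cast; ring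
  rw [← sq_eq_sq₀ (norm_nonneg _) (by positivity), Complex.sq_norm, Complex.normSq_apply,
    lam1_eq_of_discrim_nonpos h, sq_rpow]
  linear_combination sq_rpow_two_mul / 4 + Real.sq_sqrt (sub_nonneg.mpr h) / 4

theorem norm_lam1_sub_lam2_of_discrim_nonpos (h : ‖ξ‖ ^ (4 * δ) ≤ 4 * ‖ξ‖ ^ (2 * σ)) :
    ‖lam1 σ δ ξ - lam2 σ δ ξ‖ = √(4 * ‖ξ‖ ^ (2 * σ) - ‖ξ‖ ^ (4 * δ)) := by
  rw [lam2_eq_conj_lam1_of_discrim_nonpos h, Complex.sub_conj, lam1_eq_of_discrim_nonpos h,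
    mul_div_cancel₀ _ two_ne_zero, norm_mul, Complex.norm_I, mul_one, Complex.norm_real,
    Real.norm_of_nonneg (Real.sqrt_nonneg _)]

theorem re_lam1_mul_of_discrim_nonpos (h : ‖ξ‖ ^ (4 * δ) ≤ 4 * ‖ξ‖ ^ (2 * σ)) (t : ℝ) :
    (lam1 σ δ ξ * t).re = -(1 / 2) * ‖ξ‖ ^ (2 * δ) * t := by
  rw [Complex.re_mul_ofReal, lam1_eq_of_discrim_nonpos h]
  ring

theorem re_lam2_mul_of_discrim_nonpos (h : ‖ξ‖ ^ (4 * δ) ≤ 4 * ‖ξ‖ ^ (2 * σ)) (t : ℝ) :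
    (lam2 σ δ ξ * t).re = -(1 / 2) * ‖ξ‖ ^ (2 * δ) * t := by
  rw [Complex.re_mul_ofReal, lam2_eq_conj_lam1_of_discrim_nonpos h, Complex.conj_re,
    ← Complex.re_mul_ofReal, re_lam1_mul_of_discrim_nonpos h]

theorem norm_K1hat_le_of_discrim_nonpos (h : ‖ξ‖ ^ (4 * δ) ≤ 4 * ‖ξ‖ ^ (2 * σ)) (t : ℝ) :
    ‖K1hat σ δ t ξ‖ ≤ |t| * Real.exp (-(1 / 2) * ‖ξ‖ ^ (2 * δ) * t) := by
  rw [← Real.norm_eq_abs, ← Complex.norm_real]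
  exact norm_exp_mul_sub_exp_mul_div_sub_le (re_lam1_mul_of_discrim_nonpos h t).le
    (re_lam2_mul_of_discrim_nonpos h t).le

theorem norm_K0hat_le_of_discrim_nonpos (h : ‖ξ‖ ^ (4 * δ) ≤ 4 * ‖ξ‖ ^ (2 * σ)) (t : ℝ) :
    ‖K0hat σ δ t ξ‖ ≤ 2 * ‖ξ‖ ^ σ / √(4 * ‖ξ‖ ^ (2 * σ) - ‖ξ‖ ^ (4 * δ)) *
      Real.exp (-(1 / 2) * ‖ξ‖ ^ (2 * δ) * t) := by
  have norm_add_norm : ‖lam1 σ δ ξ‖ + ‖lam2 σ δ ξ‖ = 2 * ‖ξ‖ ^ σ := by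
    rw [lam2_eq_conj_lam1_of_discrim_nonpos h, RCLike.norm_conj, norm_lam1_of_discrim_nonpos h,
      two_mul]
  rw [← norm_add_norm, ← norm_lam1_sub_lam2_of_discrim_nonpos h]
  exact norm_mul_exp_mul_sub_mul_exp_mul_div_sub_le (re_lam1_mul_of_discrim_nonpos h t).le
    (re_lam2_mul_of_discrim_nonpos h t).le

theorem stmt_13_general (hσδ : 2 * δ ≤ σ) (hξ : 1 ≤ ‖ξ‖) (t : ℝ) :
    ‖K1hat σ δ t ξ‖ ≤ |t| * Real.exp (-(1 / 2) * ‖ξ‖ ^ (2 * δ) * t) ∧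
      ‖K0hat σ δ t ξ‖ ≤ 2 * Real.exp (-(1 / 2) * ‖ξ‖ ^ (2 * δ) * t) := by
  have hpow : ‖ξ‖ ^ (4 * δ) ≤ ‖ξ‖ ^ (2 * σ) :=
    Real.rpow_le_rpow_of_exponent_le hξ (by linarith)
  have hpow_nonneg : 0 ≤ ‖ξ‖ ^ (2 * σ) := by positivity
  have hdiscrim : ‖ξ‖ ^ (4 * δ) ≤ 4 * ‖ξ‖ ^ (2 * σ) := by linarith
  have hsqrt : ‖ξ‖ ^ σ ≤ √(4 * ‖ξ‖ ^ (2 * σ) - ‖ξ‖ ^ (4 * δ)) := by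
    apply Real.le_sqrt_of_sq_le
    rw [← Real.rpow_mul_natCast (norm_nonneg ξ), mul_comm σ, Nat.cast_ofNat]
    linarith
  refine ⟨norm_K1hat_le_of_discrim_nonpos hdiscrim t,
    (norm_K0hat_le_of_discrim_nonpos hdiscrim t).trans ?_⟩
  gcongr
  exact div_le_of_le_mul₀ (Real.sqrt_nonneg _) zero_le_two (by gcongr)

end CharacteristicRoots

/-- Pointwise bounds on `K̂₀`, `K̂₁` for large frequencies. -/
theorem stmt_13 (n : ℕ) (hn : 1 ≤ n) (σ δ : ℝ) (hσ : 1 ≤ σ) (hδ : δ ∈ Set.Ioo 0 (σ / 2)) :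
    ∃ R c C : ℝ, 1 ≤ R ∧ 0 < c ∧ 0 < C ∧
      ∀ ξ : EuclideanSpace ℝ (Fin n), R ≤ ‖ξ‖ → ∀ t : ℝ, 0 < t →
        ‖K1hat σ δ t ξ‖ ≤ C * t * Real.exp (-c * ‖ξ‖ ^ (2 * δ) * t) ∧
        ‖K0hat σ δ t ξ‖ ≤ C * Real.exp (-c * ‖ξ‖ ^ (2 * δ) * t) := by
  refine ⟨1, 1 / 2, 2, le_rfl, by norm_num, two_pos, fun ξ hξ t ht ↦ ?_⟩
  refine (stmt_13_general (by linarith [hδ.2]) hξ t).imp_left fun hK₁ ↦ hK₁.trans ?_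
  rw [abs_of_pos ht]
  gcongr
  linarith
end
end

section
/- Let σ ≥ 1 and δ ∈ (0, σ/2). Then there exist constants ε ∈ (0,1), c > 0 and C > 0 such that for all ξ ∈ ℝⁿ with 0 < |ξ| ≤ ε: the discriminant |ξ|^{4δ} − 4|ξ|^{2σ} is positive, the characteristic roots λ₁(ξ) and λ₂(ξ) are real, negative and distinct with λ₂(ξ) < λ₁(ξ) < 0, and c|ξ|^{2(σ−δ)} ≤ −λ₁(ξ) ≤ C|ξ|^{2(σ−δ)}, c|ξ|^{2δ} ≤ −λ₂(ξ) ≤ C|ξ|^{2δ}, and c|ξ|^{2δ} ≤ λ₁(ξ) − λ₂(ξ) ≤ C|ξ|^{2δ}. -/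
open MeasureTheory Real Complex
open scoped ENNReal NNReal

noncomputable section

variable {n : ℕ}

/-!
By Vieta's formulas, `-λ₁ = |ξ|^{2σ} / (-λ₂)`. So it suffices to know that `-λ₂` and the gap
`λ₁ - λ₂` are comparable to the damping coefficient `|ξ|^{2δ}`. The gap is the square root of the
discriminant, in which `|ξ|^{2σ}` is negligible against `|ξ|^{4δ}` for small `ξ` since `2δ < σ`.
-/

open Filter Topology

section QuadraticRoots

/-- The larger root of the monic quadratic `x ^ 2 + b * x + c`, by the quadratic formula; it is a
root only if `4 * c ≤ b ^ 2`, as the square root of a negative real is `0`. -/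
def largerRoot (b c : ℝ) : ℝ := (-b + √(b ^ 2 - 4 * c)) / 2

/-- The smaller root of the monic quadratic `x ^ 2 + b * x + c`, with the same convention as
`largerRoot`. -/
def smallerRoot (b c : ℝ) : ℝ := (-b - √(b ^ 2 - 4 * c)) / 2

variable {b c : ℝ}

lemma largerRoot_sub_smallerRoot (b c : ℝ) :
    largerRoot b c - smallerRoot b c = √(b ^ 2 - 4 * c) := by
  unfold largerRoot smallerRoot
  ring

lemma largerRoot_mul_smallerRoot (h : 4 * c ≤ b ^ 2) : largerRoot b c * smallerRoot b c = c := by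
  have hsq : √(b ^ 2 - 4 * c) ^ 2 = b ^ 2 - 4 * c := Real.sq_sqrt (sub_nonneg.2 h)
  unfold largerRoot smallerRoot
  linear_combination -hsq / 4

lemma sqrt_sq_sub_four_mul_le (hb : 0 ≤ b) (hc : 0 ≤ c) : √(b ^ 2 - 4 * c) ≤ b :=
  Real.sqrt_le_iff.2 ⟨hb, by linarith⟩

lemma neg_smallerRoot_mem_Icc (hb : 0 ≤ b) (hc : 0 ≤ c) :
    -smallerRoot b c ∈ Set.Icc (b / 2) b := by
  have hnonneg : 0 ≤ √(b ^ 2 - 4 * c) := Real.sqrt_nonneg _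
  have hle : √(b ^ 2 - 4 * c) ≤ b := sqrt_sq_sub_four_mul_le hb hc
  unfold smallerRoot
  constructor <;> linarith

lemma neg_largerRoot_mem_Icc (hb : 0 < b) (hc : 0 ≤ c) (h : 4 * c ≤ b ^ 2) :
    -largerRoot b c ∈ Set.Icc (c / b) (2 * (c / b)) := by
  obtain ⟨hlower, hupper⟩ := neg_smallerRoot_mem_Icc hb.le hc
  have hpos : 0 < -smallerRoot b c := (half_pos hb).trans_le hlower
  have hvieta : -largerRoot b c = c / -smallerRoot b c := by
    rw [eq_div_iff hpos.ne', neg_mul_neg, largerRoot_mul_smallerRoot h]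
  rw [hvieta]
  refine ⟨div_le_div_of_nonneg_left hc hpos hupper, ?_⟩
  calc c / -smallerRoot b c ≤ c / (b / 2) := div_le_div_of_nonneg_left hc (half_pos hb) hlower
    _ = 2 * (c / b) := by field

lemma largerRoot_sub_smallerRoot_mem_Icc (hb : 0 ≤ b) (hc : 0 ≤ c) (h : 16 * c ≤ 3 * b ^ 2) :
    largerRoot b c - smallerRoot b c ∈ Set.Icc (b / 2) b := by
  rw [largerRoot_sub_smallerRoot]
  exact ⟨Real.le_sqrt_of_sq_le (by linarith), sqrt_sq_sub_four_mul_le hb hc⟩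

end QuadraticRoots

lemma exists_forall_rpow_le_mul_rpow {s t κ : ℝ} (hst : s < t) (hκ : 0 < κ) :
    ∃ ε ∈ Set.Ioo (0 : ℝ) 1, ∀ r, 0 < r → r ≤ ε → r ^ t ≤ κ * r ^ s := by
  have hlim : Tendsto (fun r : ℝ => r ^ (t - s)) (𝓝[>] 0) (𝓝 0) := by
    have hcont := Real.continuousAt_rpow_const 0 (t - s) (Or.inr (sub_pos.2 hst).le)
    rw [ContinuousAt, Real.zero_rpow (sub_pos.2 hst).ne'] at hcont
    exact hcont.mono_left nhdsWithin_le_nhds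
  have hsmall : ∀ᶠ r : ℝ in 𝓝[>] 0, r ^ (t - s) ≤ κ ∧ r < 1 :=
    (hlim.eventually_le_const hκ).and
      (eventually_nhdsWithin_of_eventually_nhds (eventually_lt_nhds one_pos))
  obtain ⟨ε, hε, hIoc⟩ := (nhdsGT_basis_Ioc 0).eventually_iff.1 hsmall
  refine ⟨ε, ⟨hε, (hIoc ⟨hε, le_rfl⟩).2⟩, fun r hr hrε => ?_⟩
  calc r ^ t = r ^ (t - s) * r ^ s := by rw [← Real.rpow_add hr, sub_add_cancel]
    _ ≤ κ * r ^ s := by gcongr; exact (hIoc ⟨hr, hrε⟩).1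

lemma ofReal_cpow_one_half {x : ℝ} (hx : 0 ≤ x) : (x : ℂ) ^ ((1 : ℂ) / 2) = (√x : ℝ) := by
  rw [Real.sqrt_eq_rpow, Complex.ofReal_cpow hx]
  norm_num

lemma rpow_four_mul_eq_sq {r : ℝ} (hr : 0 ≤ r) (δ : ℝ) : r ^ (4 * δ) = (r ^ (2 * δ)) ^ 2 := by
  rw [← Real.rpow_mul_natCast hr]
  ring_nf

section CharacteristicRoots

variable {σ δ : ℝ} {ξ : EuclideanSpace ℝ (Fin n)}

lemma lam1_eq_largerRoot (h : 0 ≤ ‖ξ‖ ^ (4 * δ) - 4 * ‖ξ‖ ^ (2 * σ)) :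
    lam1 σ δ ξ = (largerRoot (‖ξ‖ ^ (2 * δ)) (‖ξ‖ ^ (2 * σ)) : ℝ) := by
  rw [lam1, largerRoot, ofReal_cpow_one_half h, rpow_four_mul_eq_sq (norm_nonneg ξ)]
  push_cast
  rfl

lemma lam2_eq_smallerRoot (h : 0 ≤ ‖ξ‖ ^ (4 * δ) - 4 * ‖ξ‖ ^ (2 * σ)) :
    lam2 σ δ ξ = (smallerRoot (‖ξ‖ ^ (2 * δ)) (‖ξ‖ ^ (2 * σ)) : ℝ) := by
  rw [lam2, smallerRoot, ofReal_cpow_one_half h, rpow_four_mul_eq_sq (norm_nonneg ξ)]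
  push_cast
  rfl

end CharacteristicRoots

theorem stmt_14_general (n : ℕ) (σ δ : ℝ) (hδ : δ < σ / 2) :
    ∃ ε c C : ℝ, ε ∈ Set.Ioo (0 : ℝ) 1 ∧ 0 < c ∧ 0 < C ∧
      ∀ ξ : EuclideanSpace ℝ (Fin n), 0 < ‖ξ‖ → ‖ξ‖ ≤ ε →
        0 < ‖ξ‖ ^ (4 * δ) - 4 * ‖ξ‖ ^ (2 * σ) ∧
        (lam1 σ δ ξ).im = 0 ∧ (lam2 σ δ ξ).im = 0 ∧
        (lam2 σ δ ξ).re < (lam1 σ δ ξ).re ∧ (lam1 σ δ ξ).re < 0 ∧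
        c * ‖ξ‖ ^ (2 * (σ - δ)) ≤ -(lam1 σ δ ξ).re ∧
        -(lam1 σ δ ξ).re ≤ C * ‖ξ‖ ^ (2 * (σ - δ)) ∧
        c * ‖ξ‖ ^ (2 * δ) ≤ -(lam2 σ δ ξ).re ∧
        -(lam2 σ δ ξ).re ≤ C * ‖ξ‖ ^ (2 * δ) ∧
        c * ‖ξ‖ ^ (2 * δ) ≤ (lam1 σ δ ξ).re - (lam2 σ δ ξ).re ∧
        (lam1 σ δ ξ).re - (lam2 σ δ ξ).re ≤ C * ‖ξ‖ ^ (2 * δ) := by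
  obtain ⟨ε, hε, hsmall⟩ :=
    exists_forall_rpow_le_mul_rpow (s := 4 * δ) (t := 2 * σ) (κ := 3 / 16)
      (by linarith) (by norm_num)
  refine ⟨ε, 1 / 2, 2, hε, by norm_num, by norm_num, fun ξ hξ hξε => ?_⟩
  have hb : 0 < ‖ξ‖ ^ (2 * δ) := Real.rpow_pos_of_pos hξ _
  have hc : 0 < ‖ξ‖ ^ (2 * σ) := Real.rpow_pos_of_pos hξ _
  have hratio : 0 < ‖ξ‖ ^ (2 * σ) / ‖ξ‖ ^ (2 * δ) := div_pos hc hb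
  have hcb : 16 * ‖ξ‖ ^ (2 * σ) ≤ 3 * (‖ξ‖ ^ (2 * δ)) ^ 2 := by
    rw [← rpow_four_mul_eq_sq hξ.le]
    linarith [hsmall ‖ξ‖ hξ hξε]
  have hdisc : 0 < ‖ξ‖ ^ (4 * δ) - 4 * ‖ξ‖ ^ (2 * σ) := by linarith [hsmall ‖ξ‖ hξ hξε]
  rw [lam1_eq_largerRoot hdisc.le, lam2_eq_smallerRoot hdisc.le, mul_sub, Real.rpow_sub hξ]
  refine ⟨hdisc, Complex.ofReal_im _, Complex.ofReal_im _, ?_⟩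
  simp only [Complex.ofReal_re]
  have hlarger := neg_largerRoot_mem_Icc hb hc.le (by linarith)
  have hsmaller := neg_smallerRoot_mem_Icc hb.le hc.le
  have hgap := largerRoot_sub_smallerRoot_mem_Icc hb.le hc.le hcb
  exact ⟨sub_pos.1 ((half_pos hb).trans_le hgap.1), neg_pos.1 (hratio.trans_le hlarger.1),
    by linarith [hlarger.1], hlarger.2, by linarith [hsmaller.1], by linarith [hsmaller.2],
    by linarith [hgap.1], by linarith [hgap.2]⟩

/-- Asymptotic behavior of the characteristic roots for small frequencies:
both roots are real, negative, distinct, with `λ₁ ∼ −|ξ|^{2(σ−δ)}`, `λ₂ ∼ −|ξ|^{2δ}`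
and `λ₁ − λ₂ ∼ |ξ|^{2δ}`. -/
theorem stmt_14 (n : ℕ) (σ δ : ℝ) (hσ : 1 ≤ σ) (hδ : δ ∈ Set.Ioo 0 (σ / 2)) :
    ∃ ε c C : ℝ, ε ∈ Set.Ioo (0 : ℝ) 1 ∧ 0 < c ∧ 0 < C ∧
      ∀ ξ : EuclideanSpace ℝ (Fin n), 0 < ‖ξ‖ → ‖ξ‖ ≤ ε →
        0 < ‖ξ‖ ^ (4 * δ) - 4 * ‖ξ‖ ^ (2 * σ) ∧
        (lam1 σ δ ξ).im = 0 ∧ (lam2 σ δ ξ).im = 0 ∧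
        (lam2 σ δ ξ).re < (lam1 σ δ ξ).re ∧ (lam1 σ δ ξ).re < 0 ∧
        c * ‖ξ‖ ^ (2 * (σ - δ)) ≤ -(lam1 σ δ ξ).re ∧
        -(lam1 σ δ ξ).re ≤ C * ‖ξ‖ ^ (2 * (σ - δ)) ∧
        c * ‖ξ‖ ^ (2 * δ) ≤ -(lam2 σ δ ξ).re ∧
        -(lam2 σ δ ξ).re ≤ C * ‖ξ‖ ^ (2 * δ) ∧
        c * ‖ξ‖ ^ (2 * δ) ≤ (lam1 σ δ ξ).re - (lam2 σ δ ξ).re ∧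
        (lam1 σ δ ξ).re - (lam2 σ δ ξ).re ≤ C * ‖ξ‖ ^ (2 * δ) :=
  stmt_14_general n σ δ hδ.2
end
end

section
/- Let σ ≥ 1 and δ ∈ (0, σ/2), and define f : [1,∞) → ℝ by f(r) = √(1 − (1/4) r^{−2(σ−2δ)}). Then f is smooth, takes values in [√3/2, 1], and for every integer k ≥ 1 there exists a constant C_k > 0 such that for all r ≥ 1: |d^k f / dr^k (r)| ≤ C_k r^{−k} and |d^k (1/f) / dr^k (r)| ≤ C_k r^{−k}. -/
open Real

noncomputable section

/-!
In the variable `u = r ^ b`, differentiation in `r` acts on a product `r ^ (-k) • H (r ^ b)` as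
`r⁻¹` times a first-order operator in `u` with smooth coefficients. Hence the `k`-th derivative of
`r ↦ G (r ^ b)` is `r ^ (-k)` times a continuous function of `u`, which is bounded as long as `u`
stays in a compact set on which `G` is smooth. For `b = -a ≤ 0` and `r ≥ 1` that set is `[0, 1]`,
and `√(1 - c * u)` and its reciprocal are smooth near it because `c < 1`.
-/

section CompRpow

variable {E : Type*} [NormedAddCommGroup E] [NormedSpace ℝ E]
  {b r : ℝ} {G H : ℝ → E} {U K : Set ℝ}

theorem hasDerivAt_rpow_smul_comp_rpow {s : ℝ} {H' : E} (hr : 0 < r)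
    (hH : HasDerivAt H H' (r ^ b)) :
    HasDerivAt (fun x => x ^ s • H (x ^ b))
      (r ^ (s - 1) • ((b * r ^ b) • H' + s • H (r ^ b))) r := by
  have h_inner : HasDerivAt (fun x => H (x ^ b)) ((b * r ^ (b - 1)) • H') r :=
    hH.scomp r (hasDerivAt_rpow_const (Or.inl hr.ne'))
  refine ((hasDerivAt_rpow_const (Or.inl hr.ne')).smul h_inner).congr_deriv ?_
  rw [rpow_sub_one hr.ne', rpow_sub_one hr.ne']
  module

/-- The profile `H k` in the identity `(d/dr)^k G (r ^ b) = r ^ (-k) • H k (r ^ b)`, as a function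
of `u = r ^ b`. -/
def rpowDerivProfile (b : ℝ) (G : ℝ → E) : ℕ → ℝ → E
  | 0 => G
  | k + 1 => fun u =>
      (b * u) • deriv (rpowDerivProfile b G k) u + (-k : ℝ) • rpowDerivProfile b G k u

theorem contDiffOn_rpowDerivProfile {k : ℕ} {n : WithTop ℕ∞} (hU : IsOpen U)
    (hG : ContDiffOn ℝ (n + k) G U) : ContDiffOn ℝ n (rpowDerivProfile b G k) U := by
  induction k generalizing n with
  | zero => simpa [rpowDerivProfile] using hG
  | succ k ih =>
    have h_profile : ContDiffOn ℝ (n + 1) (rpowDerivProfile b G k) U :=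
      ih (by simpa only [Nat.cast_add, Nat.cast_one, add_assoc, add_comm (1 : WithTop ℕ∞)] using hG)
    have h_deriv : ContDiffOn ℝ n (deriv (rpowDerivProfile b G k)) U :=
      h_profile.deriv_of_isOpen hU le_rfl
    exact ((contDiffOn_const.mul contDiffOn_id).smul h_deriv).add
      ((h_profile.of_le le_self_add).const_smul (-k : ℝ))

theorem iteratedDeriv_comp_rpow {k : ℕ} (hU : IsOpen U) (hG : ContDiffOn ℝ k G U)
    (hr : 0 < r) (hrU : r ^ b ∈ U) :
    iteratedDeriv k (fun x => G (x ^ b)) r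
      = r ^ (-k : ℝ) • rpowDerivProfile b G k (r ^ b) := by
  induction k generalizing r with
  | zero => simp [rpowDerivProfile]
  | succ k ih =>
    have h_near : iteratedDeriv k (fun x => G (x ^ b)) =ᶠ[nhds r]
        fun x => x ^ (-k : ℝ) • rpowDerivProfile b G k (x ^ b) := by
      have h_cont : ContinuousAt (fun x : ℝ => x ^ b) r :=
        continuousAt_rpow_const _ _ (Or.inl hr.ne')
      filter_upwards [eventually_gt_nhds hr, h_cont (hU.mem_nhds hrU)] with x hx hxU
      exact ih (hG.of_le (by exact_mod_cast k.le_succ)) hx hxU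
    have h_profile : ContDiffOn ℝ 1 (rpowDerivProfile b G k) U :=
      contDiffOn_rpowDerivProfile hU (by simpa [add_comm] using hG)
    have h_diff : DifferentiableAt ℝ (rpowDerivProfile b G k) (r ^ b) :=
      (h_profile.contDiffAt (hU.mem_nhds hrU)).differentiableAt one_ne_zero
    rw [iteratedDeriv_succ, h_near.deriv_eq,
      (hasDerivAt_rpow_smul_comp_rpow hr h_diff.hasDerivAt).deriv, Nat.cast_succ, neg_add',
      rpowDerivProfile]

theorem exists_norm_iteratedDeriv_comp_rpow_le (b : ℝ) {k : ℕ} (hU : IsOpen U)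
    (hG : ContDiffOn ℝ k G U) (hK : IsCompact K) (hKU : K ⊆ U) :
    ∃ C : ℝ, ∀ r : ℝ, 0 < r → r ^ b ∈ K →
      ‖iteratedDeriv k (fun x => G (x ^ b)) r‖ ≤ C * r ^ (-k : ℝ) := by
  have h_profile : ContinuousOn (rpowDerivProfile b G k) U :=
    (contDiffOn_rpowDerivProfile (n := 0) hU (by simpa using hG)).continuousOn
  obtain ⟨C, hC⟩ := hK.exists_bound_of_continuousOn (h_profile.mono hKU)
  refine ⟨C, fun r hr hrK => ?_⟩
  have h_weight : 0 ≤ r ^ (-k : ℝ) := rpow_nonneg hr.le _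
  rw [iteratedDeriv_comp_rpow hU hG hr (hKU hrK), norm_smul, norm_of_nonneg h_weight, mul_comm]
  exact mul_le_mul_of_nonneg_right (hC _ hrK) h_weight

end CompRpow

theorem rpow_neg_mem_Icc_zero_one {a r : ℝ} (ha : 0 ≤ a) (hr : 1 ≤ r) :
    r ^ (-a) ∈ Set.Icc (0 : ℝ) 1 :=
  ⟨rpow_nonneg (zero_le_one.trans hr) _,
    rpow_le_one_of_one_le_of_nonpos hr (neg_nonpos.mpr ha)⟩

section SqrtProfile

variable {c : ℝ}

theorem Icc_zero_one_subset_setOf_mul_lt_one (hc : c < 1) :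
    Set.Icc (0 : ℝ) 1 ⊆ {u | c * u < 1} := by
  rintro u ⟨hu0, hu1⟩
  calc c * u ≤ max c 0 * u := mul_le_mul_of_nonneg_right (le_max_left c 0) hu0
    _ ≤ max c 0 := mul_le_of_le_one_right (le_max_right c 0) hu1
    _ < 1 := max_lt hc one_pos

theorem contDiffOn_sqrt_one_sub_mul (c : ℝ) {n : WithTop ℕ∞} :
    ContDiffOn ℝ n (fun u => √(1 - c * u)) {u | c * u < 1} :=
  ContDiffOn.sqrt (by fun_prop) fun _ hu => (sub_pos.mpr hu).ne'

theorem contDiffOn_one_div_sqrt_one_sub_mul (c : ℝ) {n : WithTop ℕ∞} :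
    ContDiffOn ℝ n (fun u => 1 / √(1 - c * u)) {u | c * u < 1} :=
  contDiffOn_const.div (contDiffOn_sqrt_one_sub_mul c) fun _ hu =>
    (sqrt_pos.mpr (sub_pos.mpr hu)).ne'

theorem sqrt_one_sub_mul_mem_Icc {u : ℝ} (hc : 0 ≤ c) (hu : u ∈ Set.Icc (0 : ℝ) 1) :
    √(1 - c * u) ∈ Set.Icc (√(1 - c)) 1 :=
  ⟨sqrt_le_sqrt (sub_le_sub_left (mul_le_of_le_one_right hc hu.2) 1),
    sqrt_le_one.mpr (sub_le_self 1 (mul_nonneg hc hu.1))⟩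

end SqrtProfile

theorem contDiffOn_sqrt_one_sub_mul_rpow_neg {a c : ℝ} (ha : 0 ≤ a) (hc : c < 1)
    {n : WithTop ℕ∞} :
    ContDiffOn ℝ n (fun r : ℝ => √(1 - c * r ^ (-a))) (Set.Ici 1) := by
  have h_rpow : ContDiffOn ℝ n (fun r : ℝ => r ^ (-a)) (Set.Ici 1) := fun r hr =>
    (contDiffAt_rpow_const_of_ne (zero_lt_one.trans_le hr).ne').contDiffWithinAt
  exact (contDiffOn_sqrt_one_sub_mul c).comp h_rpow fun r hr =>
    Icc_zero_one_subset_setOf_mul_lt_one hc (rpow_neg_mem_Icc_zero_one ha hr)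

theorem stmt_16_general (a c : ℝ) (ha : 0 ≤ a) (hc : c ∈ Set.Ico 0 1)
    (f : ℝ → ℝ) (hf : ∀ r : ℝ, f r = √(1 - c * r ^ (-a))) :
    ContDiffOn ℝ (⊤ : ℕ∞) f (Set.Ici (1 : ℝ)) ∧
    (∀ r : ℝ, 1 ≤ r → f r ∈ Set.Icc (√(1 - c)) 1) ∧
    ∀ k : ℕ, ∃ C : ℝ, 0 < C ∧ ∀ r : ℝ, 1 ≤ r →
      |iteratedDeriv k f r| ≤ C * r ^ (-(k : ℝ)) ∧
      |iteratedDeriv k (fun x => 1 / f x) r| ≤ C * r ^ (-(k : ℝ)) := by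
  obtain rfl : f = fun r => √(1 - c * r ^ (-a)) := funext hf
  refine ⟨contDiffOn_sqrt_one_sub_mul_rpow_neg ha hc.2,
    fun r hr => sqrt_one_sub_mul_mem_Icc hc.1 (rpow_neg_mem_Icc_zero_one ha hr), fun k => ?_⟩
  have hU : IsOpen {u : ℝ | c * u < 1} := isOpen_lt (by fun_prop) continuous_const
  have hKU := Icc_zero_one_subset_setOf_mul_lt_one hc.2
  obtain ⟨C₁, hC₁⟩ := exists_norm_iteratedDeriv_comp_rpow_le (-a) (k := k) hU
    (contDiffOn_sqrt_one_sub_mul c) isCompact_Icc hKU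
  obtain ⟨C₂, hC₂⟩ := exists_norm_iteratedDeriv_comp_rpow_le (-a) (k := k) hU
    (contDiffOn_one_div_sqrt_one_sub_mul c) isCompact_Icc hKU
  refine ⟨max 1 (max C₁ C₂), by positivity, fun r hr => ?_⟩
  have hr0 : 0 < r := zero_lt_one.trans_le hr
  have h_mem : r ^ (-a) ∈ Set.Icc (0 : ℝ) 1 := rpow_neg_mem_Icc_zero_one ha hr
  constructor
  · exact (hC₁ r hr0 h_mem).trans (by gcongr; simp)
  · exact (hC₂ r hr0 h_mem).trans (by gcongr; simp)

theorem sqrt_one_sub_one_div_four : √(1 - 1 / 4) = √3 / 2 := by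
  rw [sqrt_eq_iff_mul_self_eq (by norm_num) (by positivity), div_mul_div_comm,
    mul_self_sqrt (by norm_num)]
  norm_num

/-- Properties of the phase-correction factor `f(r) = √(1 − (1/4) r^{−2(σ−2δ)})`:
smoothness on `[1,∞)`, values in `[√3/2, 1]`, and the derivative bounds
`|f^{(k)}(r)| ≤ C_k r^{−k}`, `|(1/f)^{(k)}(r)| ≤ C_k r^{−k}` for `r ≥ 1`. -/
theorem stmt_16 (σ δ : ℝ) (hσ : 1 ≤ σ) (hδ : δ ∈ Set.Ioo 0 (σ / 2))
    (f : ℝ → ℝ) (hf : ∀ r : ℝ, f r = Real.sqrt (1 - (1 / 4) * r ^ (-(2 * (σ - 2 * δ))))) :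
    ContDiffOn ℝ (⊤ : ℕ∞) f (Set.Ici (1 : ℝ)) ∧
    (∀ r : ℝ, 1 ≤ r → f r ∈ Set.Icc (Real.sqrt 3 / 2) 1) ∧
    ∀ k : ℕ, 1 ≤ k → ∃ C : ℝ, 0 < C ∧ ∀ r : ℝ, 1 ≤ r →
      |iteratedDeriv k f r| ≤ C * r ^ (-(k : ℝ)) ∧
      |iteratedDeriv k (fun x => 1 / f x) r| ≤ C * r ^ (-(k : ℝ)) := by
  obtain ⟨h_smooth, h_range, h_bound⟩ :=
    stmt_16_general (2 * (σ - 2 * δ)) (1 / 4) (by linarith [hδ.2]) (by norm_num) f hf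
  exact ⟨h_smooth, sqrt_one_sub_one_div_four ▸ h_range, fun k _ => h_bound k⟩
end
end

section
/- Let σ ≥ 1, δ ∈ (0, σ/2) and c₂ ∈ ℝ with c₂ ≠ 0, and define f : [1,∞) → ℝ by f(r) = √(1 − (1/4) r^{−2(σ−2δ)}). Then for every integer k ≥ 0 there exists a constant C_k > 0 such that for all r ≥ 1 and all t ≥ 1: |∂_r^k ( sin(c₂ r^{σ} f(r) t) )| ≤ C_k t^{k} r^{k(σ−1)}. -/
open Real

noncomputable section

/-!
The derivative of `x ^ s • F (x ^ p)` is `x ^ (s - 1) • G (x ^ p)` with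
`G y = s • F y + (p * y) • F' y`. For `p ≤ 0` the argument `x ^ p` stays in `[0, 1]` when `1 ≤ x`,
so if `F` is smooth on `[0, 1]`, each derivative of `g x = x ^ s • F (x ^ p)` lowers its order of
growth by one. In Faà di Bruno's formula for `Φ (t • g r)`, a factor with `i ≥ 1` derivatives of
`t • g` is then `O(t * r ^ (s - i))`, and `t * r ^ (s - i) ≤ (t * r ^ (s - 1)) ^ i` because `1 ≤ t`
and `0 ≤ s`. The phase `c * r ^ s * f r` is the case `F y = c * √(1 - y / 4)`.
-/

open Filter Set
open scoped ContDiff Nat Topology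

theorem norm_iteratedFDeriv_comp_le_of_contDiffAt {𝕜 E F G : Type*} [NontriviallyNormedField 𝕜]
    [NormedAddCommGroup E] [NormedSpace 𝕜 E] [NormedAddCommGroup F] [NormedSpace 𝕜 F]
    [NormedAddCommGroup G] [NormedSpace 𝕜 G] {g : F → G} {f : E → F} {n : ℕ} {x : E} {C D : ℝ}
    (hg : ContDiffAt 𝕜 n g (f x)) (hf : ContDiffAt 𝕜 n f x)
    (hC : ∀ i ≤ n, ‖iteratedFDeriv 𝕜 i g (f x)‖ ≤ C)
    (hD : ∀ i, 1 ≤ i → i ≤ n → ‖iteratedFDeriv 𝕜 i f x‖ ≤ D ^ i) :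
    ‖iteratedFDeriv 𝕜 n (g ∘ f) x‖ ≤ n ! * C * D ^ n := by
  obtain ⟨v, hgv, hv, hxv⟩ := eventually_nhds_iff.1 (hg.eventually (by simp))
  obtain ⟨u, hfu, hu, hxu⟩ := eventually_nhds_iff.1
    ((hf.eventually (by simp)).and (hf.continuousAt.eventually_mem (hv.mem_nhds hxv)))
  rw [← iteratedFDerivWithin_of_isOpen n hu hxu]
  refine norm_iteratedFDerivWithin_comp_le (fun y hy => (hgv y hy).contDiffWithinAt)
    (fun y hy => (hfu y hy).1.contDiffWithinAt) le_rfl hv.uniqueDiffOn hu.uniqueDiffOn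
    (fun y hy => (hfu y hy).2) hxu (fun i hi => ?_) (fun i hi hin => ?_)
  · rw [iteratedFDerivWithin_of_isOpen i hv hxv]
    exact hC i hi
  · rw [iteratedFDerivWithin_of_isOpen i hu hxu]
    exact hD i hi hin

theorem exists_one_le_forall_le (C : ℕ → ℝ) (k : ℕ) : ∃ M, 1 ≤ M ∧ ∀ i ≤ k, C i ≤ M :=
  ((eventually_ge_atTop 1).and
    ((finite_Iic k).eventually_all.2 fun i _ => eventually_ge_atTop (C i))).exists

variable {E : Type*} [NormedAddCommGroup E] [NormedSpace ℝ E]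

/-- A symbol of order `m` at high frequency, i.e. a one-dimensional element of the Hörmander class
`S^m_{1,0}` restricted to `[1, ∞)`. Smoothness is required in a neighbourhood of `[1, ∞)` so that
the two-sided derivatives at the endpoint `1` are meaningful. -/
structure IsSymbol (m : ℝ) (g : ℝ → E) : Prop where
  contDiffAt : ∀ r, 1 ≤ r → ContDiffAt ℝ ∞ g r
  exists_norm_iteratedDeriv_le :
    ∀ k : ℕ, ∃ C, ∀ r, 1 ≤ r → ‖iteratedDeriv k g r‖ ≤ C * r ^ (m - k)

section PowerProfile

variable {s p : ℝ} {F : ℝ → E}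

theorem rpow_mem_Icc_zero_one {r : ℝ} (hr : 1 ≤ r) (hp : p ≤ 0) : r ^ p ∈ Icc (0 : ℝ) 1 :=
  ⟨rpow_nonneg (by linarith) p, rpow_le_one_of_one_le_of_nonpos hr hp⟩

theorem hasDerivAt_rpow_smul_comp_rpow_s17 {x : ℝ} {F' : E} (hx : 0 < x)
    (hF : HasDerivAt F F' (x ^ p)) :
    HasDerivAt (fun y => y ^ s • F (y ^ p))
      (x ^ (s - 1) • (s • F (x ^ p) + (p * x ^ p) • F')) x := by
  have hs := hasDerivAt_rpow_const (x := x) (p := s) (.inl hx.ne')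
  have hFp := hF.scomp x (hasDerivAt_rpow_const (x := x) (p := p) (.inl hx.ne'))
  refine (hs.smul hFp).congr_deriv ?_
  have hpow : x ^ s * (p * x ^ (p - 1)) = x ^ (s - 1) * (p * x ^ p) := by
    rw [rpow_sub_one hx.ne', rpow_sub_one hx.ne']
    ring
  rw [smul_smul, hpow, smul_add, smul_smul, smul_smul, mul_comm s, add_comm]
  rfl

theorem deriv_rpow_smul_comp_rpow_eventuallyEq {r : ℝ} (hr : 0 < r)
    (hF : ContDiffAt ℝ 1 F (r ^ p)) :
    deriv (fun x => x ^ s • F (x ^ p)) =ᶠ[𝓝 r]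
      fun x => x ^ (s - 1) • (s • F (x ^ p) + (p * x ^ p) • deriv F (x ^ p)) := by
  have hcont : ContinuousAt (· ^ p : ℝ → ℝ) r := continuousAt_rpow_const r p (.inl hr.ne')
  filter_upwards [lt_mem_nhds hr, hcont.eventually (hF.eventually (by simp))] with x hx hFx
  exact (hasDerivAt_rpow_smul_comp_rpow_s17 hx
    (hFx.differentiableAt one_ne_zero).hasDerivAt).deriv

theorem exists_norm_iteratedDeriv_rpow_smul_comp_rpow_le (hp : p ≤ 0)
    (hF : ∀ y ∈ Icc (0 : ℝ) 1, ContDiffAt ℝ ∞ F y) (k : ℕ) :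
    ∃ C, ∀ r, 1 ≤ r → ‖iteratedDeriv k (fun x => x ^ s • F (x ^ p)) r‖ ≤ C * r ^ (s - k) := by
  induction k generalizing s F with
  | zero =>
    obtain ⟨C, hC⟩ := isCompact_Icc.exists_bound_of_continuousOn
      fun y hy => (hF y hy).continuousAt.continuousWithinAt
    refine ⟨C, fun r hr => ?_⟩
    have hrs : 0 ≤ r ^ s := rpow_nonneg (by linarith) s
    rw [iteratedDeriv_zero, norm_smul, norm_of_nonneg hrs, mul_comm, Nat.cast_zero, sub_zero]
    exact mul_le_mul_of_nonneg_right (hC _ (rpow_mem_Icc_zero_one hr hp)) hrs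
  | succ k ih =>
    have hG : ∀ y ∈ Icc (0 : ℝ) 1,
        ContDiffAt ℝ ∞ (fun y => s • F y + (p * y) • deriv F y) y := fun y hy =>
      ((hF y hy).const_smul s).add
        ((contDiffAt_const.mul contDiffAt_id).smul ((hF y hy).derivWithin le_rfl))
    obtain ⟨C, hC⟩ := ih (s := s - 1) hG
    refine ⟨C, fun r hr => ?_⟩
    have hderiv := deriv_rpow_smul_comp_rpow_eventuallyEq (s := s) (by linarith : 0 < r)
      ((hF _ (rpow_mem_Icc_zero_one hr hp)).of_le (by simp))
    rw [iteratedDeriv_succ', hderiv.iteratedDeriv_eq k, Nat.cast_succ, add_comm, ← sub_sub]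
    exact hC r hr

theorem isSymbol_rpow_smul_comp_rpow (hp : p ≤ 0)
    (hF : ∀ y ∈ Icc (0 : ℝ) 1, ContDiffAt ℝ ∞ F y) :
    IsSymbol s (fun x => x ^ s • F (x ^ p)) where
  contDiffAt r hr :=
    have hr₀ : r ≠ 0 := by linarith
    (contDiffAt_rpow_const_of_ne hr₀).smul
      ((hF _ (rpow_mem_Icc_zero_one hr hp)).comp r (contDiffAt_rpow_const_of_ne hr₀))
  exists_norm_iteratedDeriv_le := exists_norm_iteratedDeriv_rpow_smul_comp_rpow_le hp hF

end PowerProfile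

namespace IsSymbol

variable {m : ℝ} {g : ℝ → E}

theorem exists_norm_iteratedDeriv_smul_le_pow (hg : IsSymbol m g) (hm : 0 ≤ m) (k : ℕ) :
    ∃ M, 1 ≤ M ∧ ∀ r t : ℝ, 1 ≤ r → 1 ≤ t → ∀ i, 1 ≤ i → i ≤ k →
      ‖iteratedDeriv i (fun x => t • g x) r‖ ≤ (M * t * r ^ (m - 1)) ^ i := by
  choose C hC using hg.exists_norm_iteratedDeriv_le
  obtain ⟨M, hM, hCM⟩ := exists_one_le_forall_le C k
  refine ⟨M, hM, fun r t hr ht i hi hik => ?_⟩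
  have hr₀ : 0 ≤ r := by linarith
  have hi₀ : i ≠ 0 := by lia
  have hexp : r ^ (m - i) ≤ (r ^ (m - 1)) ^ i := by
    rw [← rpow_mul_natCast hr₀]
    refine rpow_le_rpow_of_exponent_le hr ?_
    have : (1 : ℝ) ≤ i := mod_cast hi
    nlinarith
  calc ‖iteratedDeriv i (fun x => t • g x) r‖
      = t * ‖iteratedDeriv i g r‖ := by
        rw [iteratedDeriv_fun_const_smul_field, norm_smul, norm_of_nonneg (by linarith)]
    _ ≤ t * (M * r ^ (m - i)) := by
        gcongr
        exact (hC i r hr).trans (by gcongr; exact hCM i hik)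
    _ ≤ t ^ i * (M ^ i * (r ^ (m - 1)) ^ i) := by
        gcongr
        exacts [le_self_pow₀ ht hi₀, le_self_pow₀ hM hi₀]
    _ = (M * t * r ^ (m - 1)) ^ i := by ring

theorem exists_norm_iteratedDeriv_comp_smul_le {G : Type*} [NormedAddCommGroup G]
    [NormedSpace ℝ G] {Φ : E → G} (hg : IsSymbol m g) (hm : 0 ≤ m) (hΦ : ContDiff ℝ ∞ Φ)
    (hΦ_bdd : ∀ i : ℕ, ∃ B, ∀ y, ‖iteratedFDeriv ℝ i Φ y‖ ≤ B) (k : ℕ) :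
    ∃ C, 0 < C ∧ ∀ r t : ℝ, 1 ≤ r → 1 ≤ t →
      ‖iteratedDeriv k (fun x => Φ (t • g x)) r‖ ≤ C * t ^ k * r ^ (k * (m - 1)) := by
  choose B hB using hΦ_bdd
  obtain ⟨A, hA, hBA⟩ := exists_one_le_forall_le B k
  obtain ⟨M, hM, hgM⟩ := hg.exists_norm_iteratedDeriv_smul_le_pow hm k
  refine ⟨k ! * A * M ^ k, by positivity, fun r t hr ht => ?_⟩
  have hk : (k : ℕ∞ω) ≤ ∞ := mod_cast le_top
  calc ‖iteratedDeriv k (Φ ∘ fun x => t • g x) r‖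
      ≤ k ! * A * (M * t * r ^ (m - 1)) ^ k := by
        rw [← norm_iteratedFDeriv_eq_norm_iteratedDeriv]
        refine norm_iteratedFDeriv_comp_le_of_contDiffAt (hΦ.contDiffAt.of_le hk)
          (((hg.contDiffAt r hr).const_smul t).of_le hk)
          (fun i hi => (hB i _).trans (hBA i hi)) fun i hi hik => ?_
        rw [norm_iteratedFDeriv_eq_norm_iteratedDeriv]
        exact hgM r t hr ht i hi hik
    _ = k ! * A * M ^ k * t ^ k * r ^ (k * (m - 1)) := by
        rw [mul_comm (k : ℝ), rpow_mul_natCast (by linarith)]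
        ring

end IsSymbol

theorem norm_iteratedFDeriv_sin_le_one (i : ℕ) (y : ℝ) : ‖iteratedFDeriv ℝ i sin y‖ ≤ 1 := by
  rw [norm_iteratedFDeriv_eq_norm_iteratedDeriv]
  exact abs_iteratedDeriv_sin_le_one i y

theorem isSymbol_rpow_mul_sqrt {σ p : ℝ} (c : ℝ) (hp : p ≤ 0) :
    IsSymbol σ (fun x => x ^ σ * (c * √(1 - 1 / 4 * x ^ p))) :=
  isSymbol_rpow_smul_comp_rpow hp (F := fun y => c * √(1 - 1 / 4 * y)) fun y hy =>
    contDiffAt_const.mul (ContDiffAt.sqrt (by fun_prop) (by linarith [hy.2]))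

theorem stmt_17_general (σ δ c₂ : ℝ) (hσ : 0 ≤ σ) (hδ : δ ≤ σ / 2)
    (f : ℝ → ℝ) (hf : ∀ r : ℝ, f r = √(1 - (1 / 4) * r ^ (-(2 * (σ - 2 * δ))))) (k : ℕ) :
    ∃ C : ℝ, 0 < C ∧ ∀ r t : ℝ, 1 ≤ r → 1 ≤ t →
      |iteratedDeriv k (fun x => sin (c₂ * x ^ σ * f x * t)) r| ≤
        C * t ^ (k : ℝ) * r ^ ((k : ℝ) * (σ - 1)) := by
  have hphase : IsSymbol σ (fun x => c₂ * x ^ σ * f x) := by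
    convert isSymbol_rpow_mul_sqrt (σ := σ) c₂ (by linarith : -(2 * (σ - 2 * δ)) ≤ 0) using 2
    rw [hf]
    ring
  simpa only [rpow_natCast, smul_eq_mul, mul_comm _ (_ * f _), norm_eq_abs] using
    hphase.exists_norm_iteratedDeriv_comp_smul_le hσ contDiff_sin
      (fun i => ⟨1, norm_iteratedFDeriv_sin_le_one i⟩) k

/-- Derivative bounds for the oscillating factor `r ↦ sin(c₂ r^σ f(r) t)`:
for every `k` there is `C_k > 0` with
`|∂_r^k sin(c₂ r^σ f(r) t)| ≤ C_k t^k r^{k(σ−1)}` for all `r ≥ 1`, `t ≥ 1`. -/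
theorem stmt_17 (σ δ c₂ : ℝ) (hσ : 1 ≤ σ) (hδ : δ ∈ Set.Ioo 0 (σ / 2)) (hc₂ : c₂ ≠ 0)
    (f : ℝ → ℝ) (hf : ∀ r : ℝ, f r = Real.sqrt (1 - (1 / 4) * r ^ (-(2 * (σ - 2 * δ))))) :
    ∀ k : ℕ, ∃ C : ℝ, 0 < C ∧ ∀ r t : ℝ, 1 ≤ r → 1 ≤ t →
      |iteratedDeriv k (fun x => Real.sin (c₂ * x ^ σ * f x * t)) r| ≤
        C * t ^ (k : ℝ) * r ^ ((k : ℝ) * (σ - 1)) :=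
  stmt_17_general σ δ c₂ (by linarith) hδ.2.le f hf
end
end
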